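/- arXiv:2307.02366 — 2 statements merged into one kernel-verified Lean document; each statement's English description precedes it below -/
import Mathlib

section
/- Let p be a prime, ℓ ≥ 1, and let f be a nonzero idempotent periodic sequence in Z_{p^ℓ} with idempotency index η, generating vector (e_0, …, e_{η−1}) and leading component e_γ. Then for all sufficiently large s (precisely, whenever s ≥ η and s − η ≥ p^μ − γ, where μ is minimal with η − γ − 1 < p^μ(p−1)), the period of Σ^s f equals lcm( τ(f), τ(Σ^{s−η+γ}[e_γ]) ). -/
/-- The shift operator `θ`: `θ f n = f (n+1)`. -/
def shiftSeq {M : ℕ} (f : ℕ → ZMod M) : ℕ → ZMod M := fun n => f (n + 1)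

/-- The difference operator `Δ = θ - id`: `Δ f n = f (n+1) - f n`. -/
def deltaSeq {M : ℕ} (f : ℕ → ZMod M) : ℕ → ZMod M := fun n => f (n + 1) - f n

/-- A sequence is periodic if `θ^j f = f` for some `j ≥ 1`. -/
def IsPeriodicSeq {M : ℕ} (f : ℕ → ZMod M) : Prop := ∃ j, 1 ≤ j ∧ Function.Periodic f j

/-- The period `τ(f)`: the least `j ≥ 1` with `θ^j f = f`. -/
noncomputable def perSeq {M : ℕ} (f : ℕ → ZMod M) : ℕ :=
  sInf {j | 1 ≤ j ∧ Function.Periodic f j}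

/-- The trace `tr f = ∑_{i=0}^{τ(f)-1} f i`. -/
noncomputable def trSeq {M : ℕ} (f : ℕ → ZMod M) : ZMod M :=
  ∑ i ∈ Finset.range (perSeq f), f i

/-- The sum operator `Σ`: `Σf(0) = 0`, `Σf(n) = f(n-1) + Σf(n-1)`. -/
def sigmaSeq {M : ℕ} (f : ℕ → ZMod M) : ℕ → ZMod M
  | 0 => 0
  | n + 1 => f n + sigmaSeq f n

/-- A sequence is nilpotent if `Δ^η f = 0` for some `η ≥ 1`. -/
def IsNilpotentSeq {M : ℕ} (f : ℕ → ZMod M) : Prop := ∃ η, 1 ≤ η ∧ deltaSeq^[η] f = 0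

/-- A sequence is idempotent if `Δ^η f = f` for some `η ≥ 1`. -/
def IsIdempotentSeq {M : ℕ} (f : ℕ → ZMod M) : Prop := ∃ η, 1 ≤ η ∧ deltaSeq^[η] f = f

/-- The nilpotency index: the least `η ≥ 1` with `Δ^η f = 0`. -/
noncomputable def nilIndex {M : ℕ} (f : ℕ → ZMod M) : ℕ :=
  sInf {η | 1 ≤ η ∧ deltaSeq^[η] f = 0}

/-- The idempotency index: the least `η ≥ 1` with `Δ^η f = f`. -/
noncomputable def idemIndex {M : ℕ} (f : ℕ → ZMod M) : ℕ :=
  sInf {η | 1 ≤ η ∧ deltaSeq^[η] f = f}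

/-- The `p`-adic valuation on `ZMod M`, with `ν(0) = ∞`. -/
noncomputable def nuVal (p : ℕ) {M : ℕ} (a : ZMod M) : ℕ∞ :=
  if a = 0 then ⊤ else (padicValNat p a.val : ℕ∞)

/-- `Double(f, q^t)`: repeat `q` times each successive `q^t`-subsequence of `f`. -/
def DoubleSeq {M : ℕ} (f : ℕ → ZMod M) (q t : ℕ) : ℕ → ZMod M :=
  fun n => f ((n / q ^ (t + 1)) * q ^ t + n % q ^ t)

/-- `Alt(f, q^t)`: alternate `(q-1)q^t` zeros with the successive `q^t`-subsequences of `f`. -/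
def AltSeq {M : ℕ} (f : ℕ → ZMod M) (q t : ℕ) : ℕ → ZMod M :=
  fun n => if (n / q ^ t) % q = q - 1 then f ((n / q ^ (t + 1)) * q ^ t + n % q ^ t) else 0

/-- The binomial sequence `bin_s(n) = C(n,s) mod p^ℓ`. -/
def binSeq (p l : ℕ) (s : ℕ) : ℕ → ZMod (p ^ l) := fun n => (n.choose s : ZMod (p ^ l))

/-- `f ≡_ν g`: zeros coincide, and valuations of nonzero values coincide. -/
def nuEquiv (p : ℕ) {M : ℕ} (f g : ℕ → ZMod M) : Prop :=
  ∀ n, (f n = 0 ↔ g n = 0) ∧ (f n ≠ 0 → padicValNat p (f n).val = padicValNat p (g n).val)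

/-- `Π_i(f)`: number of entries of valuation `i` in one period of `f`. -/
noncomputable def PiCount (p : ℕ) {M : ℕ} (i : ℕ) (f : ℕ → ZMod M) : ℕ :=
  ((Finset.range (perSeq f)).filter fun x => f x ≠ 0 ∧ padicValNat p (f x).val = i).card

/-- `Z(f)`: number of zero entries in one period of `f`. -/
noncomputable def ZCount {M : ℕ} (f : ℕ → ZMod M) : ℕ :=
  ((Finset.range (perSeq f)).filter fun x => f x = 0).card

/-- The `j`-th base-`p` digit of `x`. -/
def dig (p x j : ℕ) : ℕ := x / p ^ j % p

/-!
If `Δ^η f = f` and `η ∣ s + r`, then `Δ^r f` is an `s`-fold antidifference of `f` with all the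
periods of `f`. Hence `Σ^s f = Δ^r f - P` with `Δ^s P = 0`, and the periods of `Σ^s f` are the
common periods of `f` and `P`. The last `η` of the differences `P(0), ΔP(0), …, Δ^(s-1)P(0)` are
`e_0, …, e_(η-1)`, so the leading component of `P` is `e_γ`, at index `d = s - η + γ`.

By the Gregory–Newton formula `P(x + T) - P(x) = ∑_{k ≥ 1} C(T, k) Δ^k P(x)`. Let `p^(n+1)` be the
additive order of `e_γ` and `p^a ≤ d < p^(a+1)`. Since `C(p^K, k)` has valuation `K - ν_p(k)`, the
power `p^(n+a+1)` is a period of `P` and `p^(n+a)` is not, as soon as `s ≤ d + p^a (p - 1)`; this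
is what the lower bound on `s` provides. So the periods of `P` depend only on `d` and the order of
`e_γ`, and they are those of `Σ^d [e_γ]`.
-/

open Function

section Periods

lemma isPeriodicPt_comp_succ_iff {α : Type*} {F : ℕ → α} {T : ℕ} :
    IsPeriodicPt (fun G : ℕ → α ↦ G ∘ Nat.succ) T F ↔ Periodic F T := by
  have hiter : (fun G : ℕ → α ↦ G ∘ Nat.succ)^[T] F = fun n ↦ F (n + T) := by
    induction T with
    | zero => rfl
    | succ T ih =>
      rw [iterate_succ_apply', ih]
      funext n
      exact congrArg F (Nat.succ_add_eq_add_succ n T)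
  rw [IsPeriodicPt, IsFixedPt, hiter, funext_iff, Periodic]

lemma periodic_iff_prime_pow_dvd {α : Type*} {F : ℕ → α} {p k : ℕ} (hp : p.Prime)
    (hnot : ¬ Periodic F (p ^ k)) (hper : Periodic F (p ^ (k + 1))) (T : ℕ) :
    Periodic F T ↔ p ^ (k + 1) ∣ T := by
  have : Fact p.Prime := ⟨hp⟩
  rw [← isPeriodicPt_comp_succ_iff] at hnot hper
  rw [← isPeriodicPt_comp_succ_iff, isPeriodicPt_iff_minimalPeriod_dvd,
    minimalPeriod_eq_prime_pow hnot hper]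

lemma perSeq_eq_minimalPeriod {M : ℕ} (f : ℕ → ZMod M) :
    perSeq f = minimalPeriod (fun G : ℕ → ZMod M ↦ G ∘ Nat.succ) f := by
  set k := minimalPeriod (fun G : ℕ → ZMod M ↦ G ∘ Nat.succ) f
  have hper : Periodic f k := isPeriodicPt_comp_succ_iff.1 (isPeriodicPt_minimalPeriod _ f)
  have hle (j : ℕ) (hj : 1 ≤ j ∧ Periodic f j) : k ≤ j :=
    (isPeriodicPt_comp_succ_iff.2 hj.2).minimalPeriod_le hj.1
  obtain hk0 | hk0 := Nat.eq_zero_or_pos k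
  · have hempty : {j | 1 ≤ j ∧ Periodic f j} = ∅ := by
      refine Set.eq_empty_of_forall_notMem fun j hj ↦ ?_
      have := (isPeriodicPt_comp_succ_iff.2 hj.2).minimalPeriod_pos hj.1
      omega
    rw [perSeq, hempty, Nat.sInf_empty, hk0]
  · exact IsLeast.csInf_eq ⟨⟨hk0, hper⟩, hle⟩

lemma periodic_iff_perSeq_dvd {M : ℕ} (f : ℕ → ZMod M) (T : ℕ) :
    Periodic f T ↔ perSeq f ∣ T := by
  rw [perSeq_eq_minimalPeriod, ← isPeriodicPt_comp_succ_iff, isPeriodicPt_iff_minimalPeriod_dvd]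

lemma perSeq_eq_lcm {M : ℕ} {F f g : ℕ → ZMod M}
    (h : ∀ T, Periodic F T ↔ Periodic f T ∧ Periodic g T) :
    perSeq F = Nat.lcm (perSeq f) (perSeq g) := by
  simp only [periodic_iff_perSeq_dvd] at h
  exact Nat.dvd_right_iff_eq.1 fun T ↦ by rw [h, Nat.lcm_dvd_iff]

end Periods

section ForwardDifferences

variable {M A : Type*} [AddCommMonoid M] [AddCommGroup A]

lemma fwdDiff_iter_sub (h : M) (F G : M → A) (k : ℕ) :
    (fwdDiff h)^[k] (F - G) = (fwdDiff h)^[k] F - (fwdDiff h)^[k] G :=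
  eq_sub_of_add_eq (by rw [← fwdDiff_iter_add, sub_add_cancel])

lemma fwdDiff_iter_eq_zero_of_le {h : M} {F : M → A} {N k : ℕ} (hF : (fwdDiff h)^[N] F = 0)
    (hk : N ≤ k) : (fwdDiff h)^[k] F = 0 := by
  rw [← Nat.sub_add_cancel hk, iterate_add_apply, hF]
  exact iterate_fixed (fwdDiff_const h 0) _

lemma periodic_fwdDiff_iter (h : M) {c : M} {F : M → A} (hF : Periodic F c) (k : ℕ) :
    Periodic ((fwdDiff h)^[k] F) c := fun x ↦ by
  rw [← fwdDiff_iter_comp_add, hF.funext]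

lemma shift_sub_eq_sum_fwdDiff_iter (h : M) (F : M → A) (T : ℕ) (x : M) :
    F (x + T • h) - F x = ∑ k ∈ Finset.range T, T.choose (k + 1) • (fwdDiff h)^[k + 1] F x := by
  simp [shift_eq_sum_fwdDiff_iter, Finset.sum_range_succ']

lemma eq_zero_of_forall_fwdDiff_iter_apply_zero {F : ℕ → A} (hF : ∀ k, (fwdDiff 1)^[k] F 0 = 0) :
    F = 0 := by
  funext n
  simpa [hF] using shift_eq_sum_fwdDiff_iter 1 F n 0

lemma nsmul_fwdDiff_iter_eq_zero {F : ℕ → A} {m k N : ℕ} (hF : (fwdDiff 1)^[N] F = 0)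
    (hm : ∀ j, k ≤ j → j < N → m • (fwdDiff 1)^[j] F 0 = 0) : m • (fwdDiff 1)^[k] F = 0 := by
  refine eq_zero_of_forall_fwdDiff_iter_apply_zero fun j ↦ ?_
  rw [fwdDiff_iter_const_smul, ← iterate_add_apply, Pi.smul_apply]
  obtain hj | hj := lt_or_ge (j + k) N
  · exact hm _ (Nat.le_add_left k j) hj
  · rw [fwdDiff_iter_eq_zero_of_le hF hj, Pi.zero_apply, smul_zero]

lemma eq_zero_of_fwdDiff_iter_eq_self {f : ℕ → A} {η : ℕ} (hη : 0 < η)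
    (hf : (fwdDiff 1)^[η] f = f) (h0 : ∀ i < η, (fwdDiff 1)^[i] f 0 = 0) : f = 0 :=
  eq_zero_of_forall_fwdDiff_iter_apply_zero fun k ↦ by
    rw [← IsPeriodicPt.iterate_mod_apply hf k]
    exact h0 _ (k.mod_lt hη)

end ForwardDifferences

section BinomialValuation

lemma pow_dvd_choose_prime_pow {p b w k : ℕ} (hp : p.Prime) (hk : k ≠ 0) (hkw : k < p ^ (w + 1)) :
    p ^ b ∣ (p ^ (b + w)).choose k := by
  obtain hlt | hle := lt_or_ge (p ^ (b + w)) k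
  · simp [Nat.choose_eq_zero_of_lt hlt]
  · have hkp : k.factorization p < w + 1 :=
      (Nat.pow_lt_pow_iff_right hp.one_lt).1 ((Nat.ordProj_le p hk).trans_lt hkw)
    rw [hp.pow_dvd_iff_le_factorization (Nat.choose_pos hle).ne',
      Nat.factorization_choose_prime_pow hp hle hk]
    omega

lemma not_pow_succ_dvd_choose_prime_pow {p n a : ℕ} (hp : p.Prime) :
    ¬ p ^ (n + 1) ∣ (p ^ (n + a)).choose (p ^ a) := by
  have hle : p ^ a ≤ p ^ (n + a) := Nat.pow_le_pow_right hp.pos (Nat.le_add_left a n)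
  rw [hp.pow_dvd_iff_le_factorization (Nat.choose_pos hle).ne',
    Nat.factorization_choose_prime_pow hp hle (pow_pos hp.pos a).ne', hp.factorization_pow,
    Finsupp.single_eq_same]
  omega

end BinomialValuation

section LeadingIndex

variable {A : Type*} [AddMonoid A] {p n N d : ℕ}

/-- `d` is the index of the leading component of the vector `(e 0, …, e (N - 1))`, that is, of its
last entry of maximal order, this order being `p ^ (n + 1)`. An element of valuation `v` in
`ℤ/p^ℓ` has additive order `p ^ (ℓ - v)`, so minimal valuation means maximal order; phrased with
orders, the notion makes sense in every additive monoid. -/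
structure IsLeadingIndex (p n : ℕ) (e : ℕ → A) (N d : ℕ) : Prop where
  lt : d < N
  nsmul_ne_zero : p ^ n • e d ≠ 0
  nsmul_eq_zero : ∀ k < N, p ^ (n + 1) • e k = 0
  nsmul_eq_zero_of_lt : ∀ k, d < k → k < N → p ^ n • e k = 0

lemma nsmul_eq_zero_of_dvd {m t : ℕ} {x : A} (hx : m • x = 0) (hmt : m ∣ t) : t • x = 0 :=
  addOrderOf_dvd_iff_nsmul_eq_zero.1 ((addOrderOf_dvd_of_nsmul_eq_zero hx).trans hmt)

lemma IsLeadingIndex.choose_nsmul_eq_zero {e : ℕ → A} {a k : ℕ} (hp : p.Prime)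
    (he : IsLeadingIndex p n e N (p ^ a)) (hN : N ≤ p ^ (a + 1)) (hk : k < N) (hk0 : k ≠ 0)
    (hka : k ≠ p ^ a) : (p ^ (n + a)).choose k • e k = 0 := by
  obtain hlt | hgt := hka.lt_or_gt
  · cases a with
    | zero => simp_all
    | succ b =>
      rw [← add_assoc, add_right_comm]
      exact nsmul_eq_zero_of_dvd (he.nsmul_eq_zero k hk) (pow_dvd_choose_prime_pow hp hk0 hlt)
  · exact nsmul_eq_zero_of_dvd (he.nsmul_eq_zero_of_lt k hgt hk)
      (pow_dvd_choose_prime_pow hp hk0 (hk.trans_le hN))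

lemma IsLeadingIndex.choose_nsmul_ne_zero {e : ℕ → A} {a : ℕ} (hp : p.Prime)
    (he : IsLeadingIndex p n e N d) : (p ^ (n + a)).choose (p ^ a) • e d ≠ 0 := by
  have : Fact p.Prime := ⟨hp⟩
  rw [Ne, ← addOrderOf_dvd_iff_nsmul_eq_zero,
    addOrderOf_eq_prime_pow he.nsmul_ne_zero (he.nsmul_eq_zero d he.lt)]
  exact not_pow_succ_dvd_choose_prime_pow hp

end LeadingIndex

section PolynomialSequences

variable {A : Type*} [AddCommGroup A] {F : ℕ → A} {p n N d : ℕ}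

lemma IsLeadingIndex.fwdDiff_iter {j : ℕ}
    (hF : IsLeadingIndex p n (fun k ↦ (fwdDiff 1)^[k] F 0) N d) (hj : j ≤ d) :
    IsLeadingIndex p n (fun k ↦ (fwdDiff 1)^[k] ((fwdDiff 1)^[j] F) 0) (N - j) (d - j) := by
  have hlt := hF.lt
  simp only [← iterate_add_apply]
  refine ⟨by omega, ?_, fun k hk ↦ hF.nsmul_eq_zero _ (by omega),
    fun k hdk hk ↦ hF.nsmul_eq_zero_of_lt _ (by omega) (by omega)⟩
  rw [Nat.sub_add_cancel hj]
  exact hF.nsmul_ne_zero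

lemma IsLeadingIndex.periodic_prime_pow {a : ℕ} (hp : p.Prime)
    (hnil : (fwdDiff 1)^[N] F = 0) (hF : IsLeadingIndex p n (fun k ↦ (fwdDiff 1)^[k] F 0) N d)
    (hd : d < p ^ (a + 1)) (hN : N ≤ p ^ (a + 2)) : Periodic F (p ^ (n + 1 + a)) := by
  have hall (k : ℕ) : p ^ (n + 1) • (fwdDiff 1)^[k] F = 0 :=
    nsmul_fwdDiff_iter_eq_zero hnil fun j _ ↦ hF.nsmul_eq_zero j
  have htail (k : ℕ) (hk : d < k) : p ^ n • (fwdDiff 1)^[k] F = 0 :=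
    nsmul_fwdDiff_iter_eq_zero hnil fun j hj ↦ hF.nsmul_eq_zero_of_lt j (hk.trans_le hj)
  have hterm (k : ℕ) (hk : k ≠ 0) : (p ^ (n + 1 + a)).choose k • (fwdDiff 1)^[k] F = 0 := by
    obtain hka | hka := lt_or_ge k (p ^ (a + 1))
    · exact nsmul_eq_zero_of_dvd (hall k) (pow_dvd_choose_prime_pow hp hk hka)
    obtain hkN | hkN := lt_or_ge k N
    · rw [add_right_comm, add_assoc]
      exact nsmul_eq_zero_of_dvd (htail k (hd.trans_le hka))
        (pow_dvd_choose_prime_pow hp hk (hkN.trans_le hN))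
    · rw [fwdDiff_iter_eq_zero_of_le hnil hkN, smul_zero]
  intro x
  have hshift := shift_sub_eq_sum_fwdDiff_iter 1 F (p ^ (n + 1 + a)) x
  rw [smul_eq_mul, mul_one] at hshift
  rw [← sub_eq_zero, hshift]
  exact Finset.sum_eq_zero fun k _ ↦ congrFun (hterm (k + 1) k.succ_ne_zero) x

lemma IsLeadingIndex.not_periodic_prime_pow {a : ℕ} (hp : p.Prime)
    (hnil : (fwdDiff 1)^[N] F = 0) (hF : IsLeadingIndex p n (fun k ↦ (fwdDiff 1)^[k] F 0) N (p ^ a))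
    (hN : N ≤ p ^ (a + 1)) : ¬ Periodic F (p ^ (n + a)) := by
  intro hper
  have hpa : 0 < p ^ a := pow_pos hp.pos a
  have hle : p ^ a ≤ p ^ (n + a) := Nat.pow_le_pow_right hp.pos (Nat.le_add_left a n)
  have hshift := shift_sub_eq_sum_fwdDiff_iter 1 F (p ^ (n + a)) 0
  rw [smul_eq_mul, mul_one, hper, sub_self, Finset.sum_eq_single (p ^ a - 1),
    Nat.sub_add_cancel hpa] at hshift
  · exact hF.choose_nsmul_ne_zero hp hshift.symm
  · intro k _ hk
    obtain hkN | hkN := lt_or_ge (k + 1) N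
    · exact hF.choose_nsmul_eq_zero hp hN hkN k.succ_ne_zero (by omega)
    · rw [fwdDiff_iter_eq_zero_of_le hnil hkN, Pi.zero_apply, smul_zero]
  · exact fun hmem ↦ absurd (Finset.mem_range.2 (by omega)) hmem

theorem IsLeadingIndex.periodic_iff (hp : p.Prime) (hnil : (fwdDiff 1)^[N] F = 0)
    (hF : IsLeadingIndex p n (fun k ↦ (fwdDiff 1)^[k] F 0) N d) (hd : d ≠ 0)
    (hN : N ≤ d + p ^ Nat.log p d * (p - 1)) (T : ℕ) :
    Periodic F T ↔ p ^ (n + Nat.log p d + 1) ∣ T := by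
  set a := Nat.log p d
  have hle : p ^ a ≤ d := Nat.pow_log_le_self p hd
  have hlt : d < p ^ (a + 1) := Nat.lt_pow_succ_log_self hp.one_lt d
  have hsplit : p ^ (a + 1) = p ^ a + p ^ a * (p - 1) := by
    rw [pow_succ, ← mul_one_add, Nat.add_sub_cancel' hp.one_le]
  have hdouble : 2 * p ^ (a + 1) ≤ p ^ (a + 2) := by
    rw [pow_succ' p (a + 1)]
    exact Nat.mul_le_mul_right _ hp.two_le
  have hper : Periodic F (p ^ (n + a + 1)) := by
    rw [add_right_comm]
    exact hF.periodic_prime_pow hp hnil hlt (by omega)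
  have hnot : ¬ Periodic F (p ^ (n + a)) := by
    intro hper'
    -- Once the leading index is `p ^ a`, every other term of the Newton expansion at
    -- `p ^ (n + a)` vanishes.
    have hlead := hF.fwdDiff_iter (Nat.sub_le d (p ^ a))
    rw [Nat.sub_sub_self hle] at hlead
    refine hlead.not_periodic_prime_pow hp ?_ (by omega) (periodic_fwdDiff_iter 1 hper' _)
    rw [← iterate_add_apply]
    exact fwdDiff_iter_eq_zero_of_le hnil (by omega)
  exact periodic_iff_prime_pow_dvd hp hnot hper T

end PolynomialSequences

section PartialSums

/-- The sum operator `Σ` for sequences in an arbitrary commutative monoid. -/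
def partialSum {A : Type*} [AddCommMonoid A] (F : ℕ → A) (n : ℕ) : A := ∑ i ∈ Finset.range n, F i

lemma sigmaSeq_eq_partialSum {M : ℕ} : (sigmaSeq : (ℕ → ZMod M) → ℕ → ZMod M) = partialSum := by
  funext f n
  induction n with
  | zero => rfl
  | succ n ih => rw [sigmaSeq, ih, partialSum, partialSum, Finset.sum_range_succ_comm]

lemma partialSum_iter_apply_zero {A : Type*} [AddCommMonoid A] (F : ℕ → A) {r : ℕ} (hr : r ≠ 0) :
    partialSum^[r] F 0 = 0 := by
  obtain ⟨r, rfl⟩ := Nat.exists_eq_succ_of_ne_zero hr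
  rw [iterate_succ_apply']
  exact Finset.sum_range_zero _

variable {A : Type*} [AddCommGroup A]

lemma leftInverse_fwdDiff_partialSum : LeftInverse (fwdDiff 1) (partialSum (A := A)) := by
  intro F
  funext n
  simp [fwdDiff, partialSum, Finset.sum_range_succ]

lemma fwdDiff_iter_partialSum_iter (F : ℕ → A) {k s : ℕ} (hk : k ≤ s) :
    (fwdDiff 1)^[k] (partialSum^[s] F) = partialSum^[s - k] F := by
  conv_lhs => rw [← Nat.add_sub_cancel' hk, iterate_add_apply]
  exact leftInverse_fwdDiff_partialSum.iterate k _

lemma fwdDiff_iter_partialSum_iter_apply_zero (F : ℕ → A) {k s : ℕ} (hk : k < s) :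
    (fwdDiff 1)^[k] (partialSum^[s] F) 0 = 0 := by
  rw [fwdDiff_iter_partialSum_iter F hk.le, partialSum_iter_apply_zero F (by omega)]

lemma fwdDiff_iter_partialSum_iter_const (c : A) (d : ℕ) :
    (fwdDiff 1)^[d + 1] (partialSum^[d] fun _ ↦ c) = 0 := by
  rw [iterate_succ_apply', leftInverse_fwdDiff_partialSum.iterate d]
  exact fwdDiff_const 1 c

lemma isLeadingIndex_partialSum_iter_const {p n : ℕ} {c : A} (hc : p ^ (n + 1) • c = 0)
    (hc0 : p ^ n • c ≠ 0) (d : ℕ) :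
    IsLeadingIndex p n (fun k ↦ (fwdDiff 1)^[k] (partialSum^[d] fun _ ↦ c) 0) (d + 1) d := by
  have htop : (fwdDiff 1)^[d] (partialSum^[d] fun _ ↦ c) 0 = c :=
    congrFun (leftInverse_fwdDiff_partialSum.iterate d _) 0
  refine ⟨d.lt_succ_self, by rwa [htop], fun k hk ↦ ?_, fun k hdk hk ↦ by omega⟩
  obtain hkd | rfl := (Nat.lt_succ_iff.1 hk).lt_or_eq
  · rw [fwdDiff_iter_partialSum_iter_apply_zero _ hkd, smul_zero]
  · rwa [htop]

end PartialSums

section PolynomialPart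

variable {A : Type*} [AddCommGroup A] {f : ℕ → A} {η s r : ℕ}

/-- The polynomial part of `Σ^s f`, up to sign. If `Δ^η f = f` and `η ∣ s + r`, then `Δ^r f` is an
`s`-fold antidifference of `f` having all the periods of `f`, and subtracting `Σ^s f`
leaves a sequence killed by `Δ^s`. -/
def polynomialPart (s r : ℕ) (f : ℕ → A) : ℕ → A := (fwdDiff 1)^[r] f - partialSum^[s] f

lemma periodic_partialSum_iter_iff (s r : ℕ) (f : ℕ → A) (T : ℕ) :
    Periodic (partialSum^[s] f) T ↔ Periodic f T ∧ Periodic (polynomialPart s r f) T := by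
  constructor
  · intro hsum
    have hf : Periodic f T := by
      simpa only [leftInverse_fwdDiff_partialSum.iterate s f] using periodic_fwdDiff_iter 1 hsum s
    exact ⟨hf, (periodic_fwdDiff_iter 1 hf r).sub hsum⟩
  · rintro ⟨hf, hpoly⟩
    simpa only [polynomialPart, sub_sub_cancel] using (periodic_fwdDiff_iter 1 hf r).sub hpoly

lemma fwdDiff_iter_polynomialPart (hf : (fwdDiff 1)^[η] f = f) (hr : η ∣ s + r) :
    (fwdDiff 1)^[s] (polynomialPart s r f) = 0 := by
  rw [polynomialPart, fwdDiff_iter_sub, ← iterate_add_apply, IsPeriodicPt.trans_dvd hf hr,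
    leftInverse_fwdDiff_partialSum.iterate s, sub_self]

lemma fwdDiff_iter_polynomialPart_apply_zero {k : ℕ} (hk : k < s) :
    (fwdDiff 1)^[k] (polynomialPart s r f) 0 = (fwdDiff 1)^[k + r] f 0 := by
  rw [polynomialPart, fwdDiff_iter_sub, Pi.sub_apply, ← iterate_add_apply,
    fwdDiff_iter_partialSum_iter_apply_zero f hk, sub_zero]

lemma fwdDiff_iter_polynomialPart_apply_zero_of_lt {i : ℕ} (hf : (fwdDiff 1)^[η] f = f)
    (hr : η ∣ s + r) (hs : η ≤ s) (hi : i < η) :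
    (fwdDiff 1)^[s - η + i] (polynomialPart s r f) 0 = (fwdDiff 1)^[i] f 0 := by
  have hdvd : η ∣ s - η + r := by
    rw [← Nat.sub_add_comm hs]
    exact Nat.dvd_sub hr dvd_rfl
  rw [fwdDiff_iter_polynomialPart_apply_zero (by omega), add_right_comm, add_comm _ i,
    iterate_add_apply, IsPeriodicPt.trans_dvd hf hdvd]

lemma IsLeadingIndex.polynomialPart {p n γ : ℕ} (hf : (fwdDiff 1)^[η] f = f)
    (hlead : IsLeadingIndex p n (fun i ↦ (fwdDiff 1)^[i] f 0) η γ) (hr : η ∣ s + r) (hs : η ≤ s) :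
    IsLeadingIndex p n (fun k ↦ (fwdDiff 1)^[k] (polynomialPart s r f) 0) s (s - η + γ) := by
  have hγη := hlead.lt
  refine ⟨by omega, ?_, fun k hk ↦ ?_, fun k hγk hk ↦ ?_⟩
  · rw [fwdDiff_iter_polynomialPart_apply_zero_of_lt hf hr hs hγη]
    exact hlead.nsmul_ne_zero
  · rw [fwdDiff_iter_polynomialPart_apply_zero hk, ← IsPeriodicPt.iterate_mod_apply hf]
    exact hlead.nsmul_eq_zero _ (Nat.mod_lt _ (by omega))
  · obtain ⟨i, rfl⟩ : ∃ i, k = s - η + i := Nat.exists_eq_add_of_le (by omega)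
    rw [fwdDiff_iter_polynomialPart_apply_zero_of_lt hf hr hs (by omega)]
    exact hlead.nsmul_eq_zero_of_lt i (by omega) (by omega)

theorem stmt15_general {p n γ μ : ℕ} (hp : p.Prime) (hf : (fwdDiff 1)^[η] f = f)
    (hlead : IsLeadingIndex p n (fun i ↦ (fwdDiff 1)^[i] f 0) η γ)
    (hμ : η - γ - 1 < p ^ μ * (p - 1)) (hs : η ≤ s) (hsμ : p ^ μ - γ ≤ s - η) (T : ℕ) :
    Periodic (partialSum^[s] f) T ↔
      Periodic f T ∧ Periodic (partialSum^[s - η + γ] fun _ ↦ (fwdDiff 1)^[γ] f 0) T := by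
  have hγη := hlead.lt
  have hd : s - η + γ ≠ 0 := by
    have := pow_pos hp.pos μ
    omega
  have hμlog : p ^ μ * (p - 1) ≤ p ^ Nat.log p (s - η + γ) * (p - 1) :=
    Nat.mul_le_mul_right _ <| Nat.pow_le_pow_right hp.pos <|
      Nat.le_log_of_pow_le hp.one_lt (by omega)
  have hr : η ∣ s + s * (η - 1) := by
    rw [← mul_one_add, Nat.add_sub_cancel' (by omega)]
    exact dvd_mul_left η s
  rw [periodic_partialSum_iter_iff s (s * (η - 1)),
    (hlead.polynomialPart hf hr hs).periodic_iff hp (fwdDiff_iter_polynomialPart hf hr) hd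
      (by omega),
    (isLeadingIndex_partialSum_iter_const (hlead.nsmul_eq_zero γ hγη)
      hlead.nsmul_ne_zero _).periodic_iff hp (fwdDiff_iter_partialSum_iter_const _ _) hd (by omega)]

end PolynomialPart

section Valuation

variable {p l : ℕ}

lemma prime_pow_nsmul_eq_zero_iff (hp : p.Prime) (k : ℕ) (x : ZMod (p ^ l)) :
    p ^ k • x = 0 ↔ (l : ℕ∞) ≤ k + nuVal p x := by
  have : NeZero (p ^ l) := ⟨pow_ne_zero l hp.ne_zero⟩
  have : Fact p.Prime := ⟨hp⟩
  by_cases hx : x = 0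
  · simp [hx, nuVal]
  have hval : x.val ≠ 0 := (ZMod.val_ne_zero x).2 hx
  have hcast : p ^ k • x = ((p ^ k * x.val : ℕ) : ZMod (p ^ l)) := by
    rw [nsmul_eq_mul, Nat.cast_mul, ZMod.natCast_zmod_val]
  rw [hcast, ZMod.natCast_eq_zero_iff,
    padicValNat_dvd_iff_le (mul_ne_zero (pow_ne_zero k hp.ne_zero) hval),
    padicValNat.mul (pow_ne_zero k hp.ne_zero) hval, padicValNat.prime_pow, nuVal, if_neg hx]
  norm_cast

lemma nuVal_eq_top_iff {M : ℕ} {x : ZMod M} : nuVal p x = ⊤ ↔ x = 0 := by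
  by_cases hx : x = 0 <;> simp [nuVal, hx]

lemma exists_isLeadingIndex {e : ℕ → ZMod (p ^ l)} {η γ : ℕ} (hp : p.Prime) (he : e γ ≠ 0)
    (hγη : γ < η) (hle : ∀ i < η, nuVal p (e γ) ≤ nuVal p (e i))
    (hlt : ∀ i, γ < i → i < η → nuVal p (e γ) < nuVal p (e i)) :
    ∃ n, IsLeadingIndex p n e η γ := by
  obtain ⟨v, hv⟩ := ENat.ne_top_iff_exists.1 (mt nuVal_eq_top_iff.1 he)
  have hvl : v < l := by
    have h0 := mt (prime_pow_nsmul_eq_zero_iff hp 0 (e γ)).2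
    rw [pow_zero, one_smul, ← hv] at h0
    simpa using h0 he
  obtain ⟨n, rfl⟩ : ∃ n, l = n + v + 1 := ⟨l - v - 1, by omega⟩
  refine ⟨n, hγη, ?_, fun i hi ↦ ?_, fun i hγi hi ↦ ?_⟩
  · rw [Ne, prime_pow_nsmul_eq_zero_iff hp, ← hv]
    norm_cast
    omega
  · rw [prime_pow_nsmul_eq_zero_iff hp]
    calc ((n + v + 1 : ℕ) : ℕ∞) = (n + 1 : ℕ) + nuVal p (e γ) := by
          rw [← hv]; norm_cast; omega
      _ ≤ (n + 1 : ℕ) + nuVal p (e i) := by gcongr; exact hle i hi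
  · rw [prime_pow_nsmul_eq_zero_iff hp]
    calc ((n + v + 1 : ℕ) : ℕ∞) = n + (nuVal p (e γ) + 1) := by
          rw [← hv]; norm_cast
      _ ≤ n + nuVal p (e i) := by gcongr; exact Order.add_one_le_of_lt (hlt i hγi hi)

lemma exists_isLeadingIndex_of_fwdDiff_iter_eq_self {f : ℕ → ZMod (p ^ l)} {η γ : ℕ}
    (hp : p.Prime) (hf : (fwdDiff 1)^[η] f = f) (hf0 : f ≠ 0) (hγη : γ < η)
    (hle : ∀ i < η, nuVal p ((fwdDiff 1)^[γ] f 0) ≤ nuVal p ((fwdDiff 1)^[i] f 0))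
    (hlt : ∀ i, γ < i → i < η → nuVal p ((fwdDiff 1)^[γ] f 0) < nuVal p ((fwdDiff 1)^[i] f 0)) :
    ∃ n, IsLeadingIndex p n (fun i ↦ (fwdDiff 1)^[i] f 0) η γ := by
  refine exists_isLeadingIndex hp (fun hγ ↦ hf0 ?_) hγη hle hlt
  refine eq_zero_of_fwdDiff_iter_eq_self (by omega) hf fun i hi ↦ ?_
  have htop := hle i hi
  rwa [nuVal_eq_top_iff.2 hγ, top_le_iff, nuVal_eq_top_iff] at htop

end Valuation

/-- for nonzero idempotent `f` of index `η` with leading component `e_γ`,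
whenever `s ≥ η` and `s - η ≥ p^μ - γ` (with `μ` minimal such that `η - γ - 1 < p^μ(p-1)`),
`τ(Σ^s f) = lcm(τ(f), τ(Σ^{s-η+γ}[e_γ]))`. -/
theorem stmt15 (p l : ℕ) (hp : p.Prime) (hl : 1 ≤ l)
    (f : ℕ → ZMod (p ^ l)) (hf : IsPeriodicSeq f) (hf0 : f ≠ 0)
    (η : ℕ) (hη : 1 ≤ η) (hidem : deltaSeq^[η] f = f)
    (hmin : ∀ k, 1 ≤ k → deltaSeq^[k] f = f → η ≤ k)
    (γ : ℕ) (hγη : γ < η)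
    (hlead₁ : ∀ i < η, nuVal p (deltaSeq^[γ] f 0) ≤ nuVal p (deltaSeq^[i] f 0))
    (hlead₂ : ∀ i, γ < i → i < η → nuVal p (deltaSeq^[γ] f 0) < nuVal p (deltaSeq^[i] f 0))
    (μ : ℕ) (hμ : η - γ - 1 < p ^ μ * (p - 1))
    (hμmin : ∀ ν < μ, ¬ (η - γ - 1 < p ^ ν * (p - 1))) :
    ∀ s : ℕ, η ≤ s → p ^ μ - γ ≤ s - η →
      perSeq (sigmaSeq^[s] f)
        = Nat.lcm (perSeq f)
            (perSeq (sigmaSeq^[s - η + γ] (fun _ => deltaSeq^[γ] f 0))) := by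
  intro s hs hsμ
  obtain ⟨n, hlead⟩ :=
    exists_isLeadingIndex_of_fwdDiff_iter_eq_self hp hidem hf0 hγη hlead₁ hlead₂
  exact sigmaSeq_eq_partialSum ▸ perSeq_eq_lcm (stmt15_general hp hidem hlead hμ hs hsμ)
end

section
/- Let p be a prime and ℓ ≥ 1; work in Z_{p^ℓ}. Let k > ℓ and 0 ≤ m ≤ k−ℓ−1, and let s = ⌊b_k ⋯ b_{k−m} 0 ⋯ 0 b_{k−m−ℓ−1} ⋯ b_0⌋_p with b_k ≠ 0, where the digits in positions k−m−1 down to k−m−ℓ are all equal to 0 (ℓ consecutive zero digits). Let s' = ⌊b_k ⋯ b_{k−m} 0 ⋯ 0 b_{k−m−ℓ−1} ⋯ b_0⌋_p be obtained from s by deleting the digit in position k−m−1 (so only ℓ−1 consecutive zero digits remain). Then bin_s ≡_ν Double(bin_{s'}, p^{k−m−1}); in particular Π_i(bin_s) = p·Π_i(bin_{s'}) for every 0 ≤ i < ℓ, and Z(bin_s) = p·Z(bin_{s'}). -/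
/-!
By Kummer's theorem the valuation of `binomial(n, s)` is the number of borrows in the base-`p`
subtraction `n - s`. Let `s` have zero digits in the `ℓ` positions ending at `t`, and delete the
digit in position `t` from both `n` and `s`. If no borrow is taken out of position `t`, then, the
digit of `s` there being zero, none is taken out of position `t + 1` either, and the deletion keeps
the number of borrows. If a borrow is taken out of position `t`, it has run through the whole block
of zeros; there are at least `ℓ` borrows before and after the deletion, so both binomials vanish
modulo `p ^ ℓ`.

For the counts, `Δ bin_{s+1} = bin_s` shows that `p ^ N` is a period of `bin_s` exactly when `p ^ ℓ`
divides `binomial(p ^ N, i)` for `1 ≤ i ≤ s`, which gives `τ(bin_s) = p ^ (ℓ + ⌊log_p s⌋)`; the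
deletion of a digit of `n` is a `p`-to-one map between the two periods.
-/

/-- The number obtained from `n` by deleting its base-`p` digit in position `t`; thus
`Double(f, p^t) = f ∘ deleteDigit p t`. -/
def deleteDigit (p t n : ℕ) : ℕ := n / p ^ (t + 1) * p ^ t + n % p ^ t

/-- The positions `i` out of which a borrow is taken when `s` is subtracted from `n` in base `p`;
by Kummer's theorem their number is the valuation of `binomial(n, s)`. For `n < s` the last borrow
propagates forever, and the set is infinite in accordance with `binomial(n, s) = 0`. -/
def borrowSet (p n s : ℕ) : Set ℕ := {i | n % p ^ i < s % p ^ i}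

section DeleteDigit

variable {p t : ℕ}

theorem deleteDigit_mod {i : ℕ} (hi : i ≤ t) (n : ℕ) :
    deleteDigit p t n % p ^ i = n % p ^ i := by
  rw [deleteDigit, Nat.add_mod, Nat.mod_mod_of_dvd _ (pow_dvd_pow p hi),
    Nat.mod_eq_zero_of_dvd ((pow_dvd_pow p hi).mul_left _), zero_add, Nat.mod_mod]

theorem deleteDigit_div (hp : 0 < p) (n : ℕ) : deleteDigit p t n / p ^ t = n / p ^ (t + 1) := by
  have hpt : 0 < p ^ t := pow_pos hp t
  rw [deleteDigit, add_comm, Nat.add_mul_div_right _ _ hpt, Nat.div_eq_of_lt (Nat.mod_lt _ hpt),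
    zero_add]

theorem deleteDigit_mul_pow_add (q : ℕ) {r : ℕ} (hr : r < p ^ (t + 1)) :
    deleteDigit p t (q * p ^ (t + 1) + r) = q * p ^ t + r % p ^ t := by
  rw [deleteDigit, add_comm (q * p ^ (t + 1)), Nat.add_mul_div_right _ _ (by omega),
    Nat.div_eq_of_lt hr, zero_add, pow_succ', ← mul_assoc, Nat.add_mul_mod_self_right]

theorem pow_le_deleteDigit (hp : 0 < p) {s : ℕ} (hs : p ^ (t + 1) ≤ s) :
    p ^ t ≤ deleteDigit p t s :=
  (Nat.le_mul_of_pos_left _ (Nat.div_pos hs (pow_pos hp _))).trans (Nat.le_add_right _ _)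

theorem log_deleteDigit (hp : 1 < p) {s : ℕ} (hs : p ^ (t + 1) ≤ s) :
    Nat.log p (deleteDigit p t s) + 1 = Nat.log p s := by
  have hlog : t + 1 ≤ Nat.log p s := Nat.le_log_of_pow_le hp hs
  have hlog' : t ≤ Nat.log p (deleteDigit p t s) :=
    Nat.le_log_of_pow_le hp (pow_le_deleteDigit (zero_lt_one.trans hp) hs)
  have hdiv := congrArg (Nat.log p) (deleteDigit_div (t := t) (zero_lt_one.trans hp) s)
  rw [Nat.log_div_base_pow, Nat.log_div_base_pow] at hdiv
  omega

end DeleteDigit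

section BorrowSet

theorem lt_iff_div_lt_div_of_mod_le {a x y : ℕ} (h : y % a ≤ x % a) :
    x < y ↔ x / a < y / a := by
  refine ⟨fun hxy => ?_, Nat.lt_of_div_lt_div⟩
  by_contra hle
  have := Nat.mul_le_mul_left a (not_lt.mp hle)
  have := Nat.div_add_mod x a
  have := Nat.div_add_mod y a
  omega

variable {p n s t : ℕ}

theorem le_mod_add_sub_mod_iff {m : ℕ} (hm : 0 < m) (h : s ≤ n) :
    m ≤ s % m + (n - s) % m ↔ n % m < s % m := by
  obtain ⟨c, rfl⟩ := Nat.exists_eq_add_of_le h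
  rw [Nat.add_sub_cancel_left]
  have hc := Nat.mod_lt c hm
  rcases lt_or_ge (s % m + c % m) m with hlt | hge
  · have := Nat.add_mod_of_add_mod_lt hlt
    omega
  · have := Nat.add_mod_add_of_le_add_mod hge
    omega

theorem borrowSet_infinite_of_lt (hp : 1 < p) (h : n < s) : (borrowSet p n s).Infinite := by
  refine Set.infinite_of_forall_exists_gt fun i => ⟨s + i + 1, ?_, by omega⟩
  have hs : s < p ^ (s + i + 1) :=
    (Nat.lt_pow_self hp).trans_le (Nat.pow_le_pow_right hp.le (by omega))
  rwa [borrowSet, Set.mem_ofPred_eq, Nat.mod_eq_of_lt (h.trans hs), Nat.mod_eq_of_lt hs]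

theorem emultiplicity_choose_eq_encard_borrowSet (hp : p.Prime) (n s : ℕ) :
    emultiplicity p (n.choose s) = (borrowSet p n s).encard := by
  rcases lt_or_ge n s with hlt | hle
  · rw [Nat.choose_eq_zero_of_lt hlt, emultiplicity_zero,
      (borrowSet_infinite_of_lt hp.one_lt hlt).encard_eq]
  · rw [hp.emultiplicity_choose hle (Nat.lt_succ_self _), ← Set.encard_coe_eq_coe_finsetCard]
    congr 1
    ext i
    simp only [Finset.coe_filter, Finset.mem_Ico, borrowSet, Set.mem_ofPred_eq,
      le_mod_add_sub_mod_iff (pow_pos hp.pos i) hle, and_iff_right_iff_imp]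
    intro hi
    constructor
    · by_contra h0
      obtain rfl : i = 0 := by omega
      simp [Nat.mod_one] at hi
    · by_contra hlog
      have hn : n < p ^ i := Nat.lt_pow_of_log_lt hp.one_lt (by omega)
      rw [Nat.mod_eq_of_lt hn, Nat.mod_eq_of_lt (hle.trans_lt hn)] at hi
      omega

theorem mem_borrowSet_deleteDigit_of_le {i : ℕ} (hi : i ≤ t) :
    i ∈ borrowSet p (deleteDigit p t n) (deleteDigit p t s) ↔ i ∈ borrowSet p n s := by
  simp only [borrowSet, Set.mem_ofPred_eq, deleteDigit_mod hi]

theorem mod_pow_succ_le_of_dig_eq_zero (hs : dig p s t = 0) (h : s % p ^ t ≤ n % p ^ t) :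
    s % p ^ (t + 1) ≤ n % p ^ (t + 1) := by
  rw [dig] at hs
  rw [pow_succ, Nat.mod_mul, Nat.mod_mul, hs, mul_zero, add_zero]
  exact h.trans (Nat.le_add_right _ _)

theorem mem_borrowSet_add_iff {a : ℕ} (h : s % p ^ a ≤ n % p ^ a) (c : ℕ) :
    a + c ∈ borrowSet p n s ↔ c ∈ borrowSet p (n / p ^ a) (s / p ^ a) := by
  simp only [borrowSet, Set.mem_ofPred_eq, pow_add]
  rw [lt_iff_div_lt_div_of_mod_le (a := p ^ a) (by simpa only [Nat.mod_mul_right_mod] using h),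
    Nat.mod_mul_right_div_self, Nat.mod_mul_right_div_self]

theorem encard_borrowSet_deleteDigit (hp : 0 < p) (hs : dig p s t = 0)
    (h : s % p ^ t ≤ n % p ^ t) :
    (borrowSet p (deleteDigit p t n) (deleteDigit p t s)).encard = (borrowSet p n s).encard := by
  -- No borrow is taken out of position `t + 1`, so removing that position loses nothing.
  let skip (i : ℕ) : ℕ := if i ≤ t then i else i + 1
  have hinj : skip.Injective := fun i j hij => by grind
  have hnotMem : t + 1 ∉ borrowSet p n s :=
    (mod_pow_succ_le_of_dig_eq_zero hs h).not_gt
  have hrange : borrowSet p n s ⊆ Set.range skip := by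
    intro i hi
    have : i ≠ t + 1 := fun h => hnotMem (h ▸ hi)
    exact ⟨if i ≤ t then i else i - 1, by grind⟩
  have hpreimage :
      skip ⁻¹' borrowSet p n s = borrowSet p (deleteDigit p t n) (deleteDigit p t s) := by
    ext i
    rw [Set.mem_preimage]
    rcases le_or_gt i t with hi | hi
    · rw [show skip i = i from if_pos hi, mem_borrowSet_deleteDigit_of_le hi]
    · obtain ⟨c, rfl⟩ := Nat.exists_eq_add_of_le hi.le
      rw [show skip (t + c) = t + 1 + c by grind,
        mem_borrowSet_add_iff (mod_pow_succ_le_of_dig_eq_zero hs h),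
        mem_borrowSet_add_iff (by rwa [deleteDigit_mod le_rfl, deleteDigit_mod le_rfl]),
        deleteDigit_div hp, deleteDigit_div hp]
  rw [← hpreimage, Set.encard_preimage_of_injective_subset_range hinj hrange]

theorem mod_pow_eq_of_dig_eq_zero {a b : ℕ} (hab : a ≤ b)
    (hs : ∀ j, a ≤ j → j < b → dig p s j = 0) : s % p ^ b = s % p ^ a := by
  induction b, hab using Nat.le_induction with
  | base => rfl
  | succ b hab ih =>
    have hb : s / p ^ b % p = 0 := hs b hab b.lt_succ_self
    rw [pow_succ, Nat.mod_mul, hb, mul_zero, add_zero,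
      ih fun j haj hjb => hs j haj (hjb.trans b.lt_succ_self)]

theorem mod_pow_le_mod_pow {i j : ℕ} (h : i ≤ j) (n : ℕ) : n % p ^ i ≤ n % p ^ j := by
  rw [← Nat.mod_mod_of_dvd n (pow_dvd_pow p h)]
  exact Nat.mod_le _ _

theorem Icc_subset_borrowSet {a : ℕ} (hs : s % p ^ t = s % p ^ a) (h : n % p ^ t < s % p ^ t) :
    Set.Icc a t ⊆ borrowSet p n s := fun i hi =>
  calc n % p ^ i ≤ n % p ^ t := mod_pow_le_mod_pow hi.2 n
    _ < s % p ^ t := h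
    _ = s % p ^ a := hs
    _ ≤ s % p ^ i := mod_pow_le_mod_pow hi.1 s

theorem le_encard_borrowSet {l : ℕ} (hs : s % p ^ t = s % p ^ (t + 1 - l))
    (h : n % p ^ t < s % p ^ t) : (l : ℕ∞) ≤ (borrowSet p n s).encard := by
  have hl : l ≤ t := by
    by_contra hl
    rw [hs, Nat.sub_eq_zero_of_le (by omega), pow_zero, Nat.mod_one] at h
    exact Nat.not_lt_zero _ h
  calc (l : ℕ∞) = (Set.Icc (t + 1 - l) t).encard := by
        rw [← Finset.coe_Icc, Set.encard_coe_eq_coe_finsetCard, Nat.card_Icc]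
        congr 1
        omega
    _ ≤ (borrowSet p n s).encard := Set.encard_le_encard (Icc_subset_borrowSet hs h)

end BorrowSet

section Valuation

variable {p l : ℕ}

theorem emultiplicity_mod_pow {a : ℕ} (h : ¬ p ^ l ∣ a) :
    emultiplicity p (a % p ^ l) = emultiplicity p a := by
  refine emultiplicity_eq_emultiplicity_iff.2 fun j => ?_
  rcases le_or_gt j l with hj | hj
  · exact Nat.dvd_mod_iff (pow_dvd_pow p hj)
  · have hmod : ¬ p ^ l ∣ a % p ^ l := by rwa [Nat.dvd_mod_iff dvd_rfl]
    exact iff_of_false (fun hd => hmod ((pow_dvd_pow p hj.le).trans hd))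
      (fun hd => h ((pow_dvd_pow p hj.le).trans hd))

theorem nuVal_natCast (a : ℕ) :
    nuVal p (a : ZMod (p ^ l)) = if l ≤ emultiplicity p a then ⊤ else emultiplicity p a := by
  by_cases h : p ^ l ∣ a
  · rw [if_pos (pow_dvd_iff_le_emultiplicity.1 h), nuVal,
      if_pos ((ZMod.natCast_eq_zero_iff _ _).2 h)]
  · have hp : p ≠ 1 := by
      rintro rfl
      exact h (by rw [one_pow]; exact one_dvd a)
    rw [if_neg (pow_dvd_iff_le_emultiplicity.not.1 h), nuVal,
      if_neg ((ZMod.natCast_eq_zero_iff _ _).not.2 h), ZMod.val_natCast,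
      padicValNat_eq_emultiplicity_of_ne_one hp (fun h0 => h (Nat.dvd_of_mod_eq_zero h0)),
      emultiplicity_mod_pow h]

theorem nuVal_binSeq (hp : p.Prime) (s n : ℕ) :
    nuVal p (binSeq p l s n) =
      if l ≤ (borrowSet p n s).encard then ⊤ else (borrowSet p n s).encard := by
  rw [binSeq, nuVal_natCast, emultiplicity_choose_eq_encard_borrowSet hp]

theorem nuEquiv_iff_nuVal_eq {M : ℕ} {f g : ℕ → ZMod M} :
    nuEquiv p f g ↔ ∀ n, nuVal p (f n) = nuVal p (g n) := by
  refine forall_congr' fun n => ?_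
  by_cases hf : f n = 0 <;> by_cases hg : g n = 0 <;> simp [nuVal, hf, hg]

theorem nuVal_binSeq_deleteDigit {s t : ℕ} (hp : p.Prime) (hl : 1 ≤ l)
    (hdig : ∀ j ≤ t, t < j + l → dig p s j = 0) (n : ℕ) :
    nuVal p (binSeq p l (deleteDigit p t s) (deleteDigit p t n)) = nuVal p (binSeq p l s n) := by
  rw [nuVal_binSeq hp, nuVal_binSeq hp]
  rcases lt_or_ge (n % p ^ t) (s % p ^ t) with hlt | hge
  · have hs : s % p ^ t = s % p ^ (t + 1 - l) :=
      mod_pow_eq_of_dig_eq_zero (by omega) fun j _ _ => hdig j (by omega) (by omega)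
    rw [if_pos (le_encard_borrowSet hs hlt), if_pos (le_encard_borrowSet (t := t) ?_ ?_)]
    · rwa [deleteDigit_mod le_rfl, deleteDigit_mod (by omega)]
    · rwa [deleteDigit_mod le_rfl, deleteDigit_mod le_rfl]
  · rw [encard_borrowSet_deleteDigit hp.pos (hdig t le_rfl (by omega)) hge]

theorem nuEquiv_doubleSeq_deleteDigit {s t : ℕ} (hp : p.Prime) (hl : 1 ≤ l)
    (hdig : ∀ j ≤ t, t < j + l → dig p s j = 0) :
    nuEquiv p (binSeq p l s) (DoubleSeq (binSeq p l (deleteDigit p t s)) p t) :=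
  nuEquiv_iff_nuVal_eq.2 fun n => (nuVal_binSeq_deleteDigit hp hl hdig n).symm

end Valuation

section Period

variable {M : ℕ} {f : ℕ → ZMod M}

theorem shiftSeq_iterate (j : ℕ) (f : ℕ → ZMod M) : shiftSeq^[j] f = fun n => f (n + j) := by
  induction j generalizing f with
  | zero => rfl
  | succ j ih =>
    rw [Function.iterate_succ_apply, ih]
    funext n
    rw [shiftSeq, add_assoc]

theorem isPeriodicPt_shiftSeq_iff {j : ℕ} :
    Function.IsPeriodicPt shiftSeq j f ↔ Function.Periodic f j := by
  rw [Function.IsPeriodicPt, Function.IsFixedPt, shiftSeq_iterate, funext_iff, Function.Periodic]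

theorem perSeq_eq_minimalPeriod_s18 (f : ℕ → ZMod M) :
    perSeq f = Function.minimalPeriod shiftSeq f := by
  simp only [perSeq, ← isPeriodicPt_shiftSeq_iff]
  by_cases h : f ∈ Function.periodicPts shiftSeq
  · refine IsLeast.csInf_eq ⟨⟨Function.minimalPeriod_pos_of_mem_periodicPts h,
      Function.isPeriodicPt_minimalPeriod _ _⟩, fun j hj => hj.2.minimalPeriod_le hj.1⟩
  · rw [Function.minimalPeriod_eq_zero_of_notMem_periodicPts h, Nat.sInf_eq_zero]
    exact Or.inr (Set.eq_empty_of_forall_notMem fun j hj => h ⟨j, hj⟩)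

theorem periodic_iff_perSeq_dvd_s18 {j : ℕ} : Function.Periodic f j ↔ perSeq f ∣ j := by
  rw [← isPeriodicPt_shiftSeq_iff, perSeq_eq_minimalPeriod_s18,
    Function.isPeriodicPt_iff_minimalPeriod_dvd]

theorem periodic_iff_periodic_deltaSeq {j : ℕ} :
    Function.Periodic f j ↔ Function.Periodic (deltaSeq f) j ∧ f j = f 0 := by
  refine ⟨fun h => ⟨fun n => ?_, h.eq⟩, fun ⟨hdelta, h0⟩ n => ?_⟩
  · rw [deltaSeq, deltaSeq, add_right_comm, h, h]
  · induction n with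
    | zero => rwa [zero_add]
    | succ n ih =>
      have hn : f (n + j + 1) - f (n + j) = f (n + 1) - f n := hdelta n
      rwa [ih, sub_left_inj, add_right_comm] at hn

variable {p l s : ℕ}

theorem deltaSeq_binSeq_succ : deltaSeq (binSeq p l (s + 1)) = binSeq p l s := by
  funext n
  rw [deltaSeq, binSeq, binSeq, binSeq, Nat.choose_succ_succ, Nat.cast_add, add_sub_cancel_right]

theorem periodic_binSeq_iff {j : ℕ} :
    Function.Periodic (binSeq p l s) j ↔ ∀ i, 1 ≤ i → i ≤ s → p ^ l ∣ j.choose i := by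
  induction s with
  | zero =>
    refine iff_of_true (fun n => ?_) (fun i hi hi' => by omega)
    rw [binSeq, binSeq, Nat.choose_zero_right, Nat.choose_zero_right]
  | succ s ih =>
    have h0 : binSeq p l (s + 1) j = binSeq p l (s + 1) 0 ↔ p ^ l ∣ j.choose (s + 1) := by
      rw [binSeq, binSeq, Nat.choose_zero_succ, Nat.cast_zero, ZMod.natCast_eq_zero_iff]
    rw [periodic_iff_periodic_deltaSeq, deltaSeq_binSeq_succ, ih, h0]
    grind

theorem pow_dvd_choose_prime_pow_iff {N j : ℕ} (hp : p.Prime) (hj0 : j ≠ 0) (hj : j ≤ p ^ N) :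
    p ^ l ∣ (p ^ N).choose j ↔ l + j.factorization p ≤ N := by
  have h := Nat.factorization_choose_prime_pow_add_factorization hp hj hj0
  rw [hp.pow_dvd_iff_le_factorization (Nat.choose_pos hj).ne']
  omega

theorem periodic_binSeq_prime_pow_iff {N : ℕ} (hp : p.Prime) (hl : 1 ≤ l) (hs : s ≠ 0) :
    Function.Periodic (binSeq p l s) (p ^ N) ↔ l + Nat.log p s ≤ N := by
  rw [periodic_binSeq_iff]
  constructor
  · intro h
    set m := min (Nat.log p s) N
    have hms : p ^ m ≤ s := Nat.pow_le_of_le_log hs (min_le_left _ _)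
    have hmN : p ^ m ≤ p ^ N := Nat.pow_le_pow_right hp.pos (min_le_right _ _)
    have hdvd := h (p ^ m) (pow_pos hp.pos m) hms
    rw [pow_dvd_choose_prime_pow_iff hp (pow_pos hp.pos m).ne' hmN,
      Nat.factorization_pow_self hp] at hdvd
    omega
  · intro h i hi his
    rcases le_or_gt i (p ^ N) with hiN | hiN
    · rw [pow_dvd_choose_prime_pow_iff hp (by omega) hiN]
      have hlog : Nat.log p i ≤ Nat.log p s := Nat.log_mono_right his
      have : i.factorization p ≤ Nat.log p i :=
        Nat.le_log_of_pow_le hp.one_lt (Nat.ordProj_le p (by omega))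
      omega
    · rw [Nat.choose_eq_zero_of_lt hiN]
      exact dvd_zero _

theorem perSeq_binSeq (hp : p.Prime) (hl : 1 ≤ l) (hs : s ≠ 0) :
    perSeq (binSeq p l s) = p ^ (l + Nat.log p s) := by
  have hdvd (N : ℕ) : perSeq (binSeq p l s) ∣ p ^ N ↔ l + Nat.log p s ≤ N := by
    rw [← periodic_iff_perSeq_dvd_s18, periodic_binSeq_prime_pow_iff hp hl hs]
  obtain ⟨a, ha, hper⟩ := (Nat.dvd_prime_pow hp).1 ((hdvd _).2 le_rfl)
  rw [hper, ha.antisymm ((hdvd a).1 hper.dvd)]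

end Period

section Count

variable {p t : ℕ}

theorem count_congr {P Q : ℕ → Prop} [DecidablePred P] [DecidablePred Q] {n : ℕ}
    (h : ∀ k < n, P k ↔ Q k) : Nat.count P n = Nat.count Q n :=
  (Nat.count_mono_left fun k hk => (h k hk).1).antisymm
    (Nat.count_mono_left fun k hk => (h k hk).2)

theorem count_mul_of_periodic (P : ℕ → Prop) [DecidablePred P] {a : ℕ}
    (h : Function.Periodic P a) (c : ℕ) : Nat.count P (c * a) = c * Nat.count P a := by
  induction c with
  | zero => simp
  | succ c ih =>
    have hshift : (fun k => P (c * a + k)) = P := by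
      funext k
      rw [add_comm]
      exact h.nat_mul c k
    rw [add_mul, one_mul, Nat.count_add, ih, add_mul, one_mul]
    simp only [hshift]

theorem count_comp_deleteDigit (P : ℕ → Prop) [DecidablePred P] (q : ℕ) :
    Nat.count (fun n => P (deleteDigit p t n)) (q * p ^ (t + 1)) =
      p * Nat.count P (q * p ^ t) := by
  induction q with
  | zero => simp
  | succ q ih =>
    let block (r : ℕ) : Prop := P (q * p ^ t + r)
    have hblock : Nat.count (fun r => P (deleteDigit p t (q * p ^ (t + 1) + r))) (p ^ (t + 1)) =
        p * Nat.count block (p ^ t) :=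
      calc _ = Nat.count (fun r => block (r % p ^ t)) (p ^ (t + 1)) :=
            count_congr fun r hr => by rw [deleteDigit_mul_pow_add q hr]
        _ = p * Nat.count (fun r => block (r % p ^ t)) (p ^ t) := by
            rw [pow_succ', count_mul_of_periodic]
            exact fun r => by simp only [Nat.add_mod_right]
        _ = p * Nat.count block (p ^ t) := by
            rw [count_congr fun r hr => by rw [Nat.mod_eq_of_lt hr]]
    rw [add_mul, add_mul, one_mul, one_mul, Nat.count_add, Nat.count_add, ih, hblock, mul_add]

theorem piCount_eq_count {M : ℕ} (i : ℕ) (f : ℕ → ZMod M) :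
    PiCount p i f = Nat.count (fun n => nuVal p (f n) = i) (perSeq f) := by
  rw [PiCount, Nat.count_eq_card_filter_range]
  congr 1
  ext n
  simp only [Finset.mem_filter]
  by_cases h : f n = 0 <;> simp [nuVal, h]

theorem zCount_eq_count {M : ℕ} (f : ℕ → ZMod M) :
    ZCount f = Nat.count (fun n => nuVal p (f n) = ⊤) (perSeq f) := by
  rw [ZCount, Nat.count_eq_card_filter_range]
  congr 1
  ext n
  simp only [Finset.mem_filter]
  by_cases h : f n = 0 <;> simp [nuVal, h]

theorem count_nuVal_of_nuEquiv_doubleSeq {M : ℕ} {f g : ℕ → ZMod M}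
    (h : nuEquiv p f (DoubleSeq g p t)) (hper : perSeq f = p * perSeq g)
    (hdvd : p ^ t ∣ perSeq g) (v : ℕ∞) :
    Nat.count (fun n => nuVal p (f n) = v) (perSeq f) =
      p * Nat.count (fun n => nuVal p (g n) = v) (perSeq g) := by
  obtain ⟨q, hq⟩ := hdvd
  have hpq : p * (p ^ t * q) = q * p ^ (t + 1) := by ring
  have hfg (n : ℕ) : nuVal p (f n) = nuVal p (g (deleteDigit p t n)) :=
    nuEquiv_iff_nuVal_eq.1 h n
  simp only [hper, hq, hpq, hfg]
  rw [count_comp_deleteDigit (fun n => nuVal p (g n) = v), mul_comm q]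

end Count

theorem stmt18_general (p l : ℕ) (hp : p.Prime) (hl : 1 ≤ l) (t s : ℕ) (hs : p ^ (t + 1) ≤ s)
    (hdig : ∀ j ≤ t, t < j + l → dig p s j = 0) :
    nuEquiv p (binSeq p l s) (DoubleSeq (binSeq p l (deleteDigit p t s)) p t) ∧
    (∀ i, PiCount p i (binSeq p l s) = p * PiCount p i (binSeq p l (deleteDigit p t s))) ∧
    ZCount (binSeq p l s) = p * ZCount (binSeq p l (deleteDigit p t s)) := by
  have hnu := nuEquiv_doubleSeq_deleteDigit hp hl hdig
  have hlog := log_deleteDigit hp.one_lt hs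
  have hle : p ^ t ≤ deleteDigit p t s := pow_le_deleteDigit hp.pos hs
  have hs0 : deleteDigit p t s ≠ 0 := ((pow_pos hp.pos t).trans_le hle).ne'
  have hper' := perSeq_binSeq hp hl hs0
  have hper : perSeq (binSeq p l s) = p * perSeq (binSeq p l (deleteDigit p t s)) := by
    rw [hper', perSeq_binSeq hp hl ((pow_pos hp.pos _).trans_le hs).ne', ← hlog, ← pow_succ',
      add_assoc]
  have hdvd : p ^ t ∣ perSeq (binSeq p l (deleteDigit p t s)) := by
    rw [hper']
    exact pow_dvd_pow p ((Nat.le_log_of_pow_le hp.one_lt hle).trans (Nat.le_add_left _ _))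
  have hcount := count_nuVal_of_nuEquiv_doubleSeq hnu hper hdvd
  refine ⟨hnu, fun i => ?_, ?_⟩
  · rw [piCount_eq_count, piCount_eq_count, hcount]
  · rw [zCount_eq_count (p := p), zCount_eq_count (p := p), hcount]

/-- if the base-`p` digits of `s` in positions `k-m-1, …, k-m-ℓ` are all `0`
and `s'` is obtained by deleting the digit in position `k-m-1`, then
`bin_s ≡_ν Double(bin_{s'}, p^{k-m-1})`, `Π_i(bin_s) = p·Π_i(bin_{s'})` for all `i < ℓ`,
and `Z(bin_s) = p·Z(bin_{s'})`. -/
theorem stmt18 (p l : ℕ) (hp : p.Prime) (hl : 1 ≤ l) (k m s : ℕ)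
    (hkl : l < k) (hmk : m + l + 1 ≤ k)
    (hs1 : p ^ k ≤ s) (hs2 : s < p ^ (k + 1))
    (hdig : ∀ j, k - m - l ≤ j → j + m + 1 ≤ k → dig p s j = 0)
    (s' : ℕ)
    (hs' : s' = (s / p ^ (k - m)) * p ^ (k - m - 1) + s % p ^ (k - m - 1)) :
    nuEquiv p (binSeq p l s) (DoubleSeq (binSeq p l s') p (k - m - 1)) ∧
    (∀ i < l, PiCount p i (binSeq p l s) = p * PiCount p i (binSeq p l s')) ∧
    ZCount (binSeq p l s) = p * ZCount (binSeq p l s') := by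
  obtain ⟨t, ht⟩ : ∃ t, k - m = t + 1 := ⟨k - m - 1, by omega⟩
  have hts : p ^ (t + 1) ≤ s := (Nat.pow_le_pow_right hp.pos (by omega)).trans hs1
  rw [ht, Nat.add_sub_cancel] at hs'
  rw [ht, Nat.add_sub_cancel, show s' = deleteDigit p t s from hs']
  have h := stmt18_general p l hp hl t s hts fun j hj hjl => hdig j (by omega) (by omega)
  exact ⟨h.1, fun i _ => h.2.1 i, h.2.2⟩
end
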